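/- Let X, Z be sets, L, N complete lattices, g : Z → X, and ρ : L → N a map preserving arbitrary infima, so that the preimage operator r = (g,ρ)^← : (X → L) → (Z → N), r(u) = ρ ∘ u ∘ g, preserves arbitrary pointwise infima. Let Λ be a nonempty index set and for each λ ∈ Λ let Y_λ be a set, M_λ a complete lattice, f_λ : X → Y_λ, φ_λ : M_λ → L, let q_λ be a right adjoint of the preimage operator p_λ = (f_λ,φ_λ)^← (Galois connection: p_λ(b) ≤ u ⟺ b ≤ q_λ(u)), let i_λ be an interior map on M_λ^{Y_λ}, and let î_λ = p_λ ∘ i_λ ∘ q_λ. Define ĩ(u) = ⨅_{λ ∈ Λ} î_λ(u). Let i_Z be an interior map on N^Z. If for every λ ∈ Λ the composite (f_λ ∘ g, ρ ∘ φ_λ) is fuzzy I-continuous from (Z,N,i_Z) to (Y_λ,M_λ,i_λ), i.e. r(p_λ(i_λ w)) ≤ i_Z(r(p_λ w)) for all w : Y_λ → M_λ, then (g,ρ) is fuzzy I-continuous from (Z,N,i_Z) to (X,L,ĩ): r(ĩ(u)) ≤ i_Z(r(u)) for all u : X → L. -/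

import Mathlib

section FuzzyPreimage

variable {X Y Z L M N : Type*}

/-- The preimage operator `(f, φ)^← : M^Y → L^X` of a pair of maps `f : X → Y`, `φ : M → L`. -/
def fuzzyPreimage (f : X → Y) (φ : M → L) (b : Y → M) : X → L :=
  φ ∘ b ∘ f

/-- Fuzzy I-continuity of the pair `(f, φ)` from `(X, L, iX)` to `(Y, M, iY)`. It is defined for
arbitrary operators `iX` and `iY`. -/
def FuzzyIContinuous [LE L] (f : X → Y) (φ : M → L)
    (iX : (X → L) → (X → L)) (iY : (Y → M) → (Y → M)) : Prop :=
  ∀ v, fuzzyPreimage f φ (iY v) ≤ iX (fuzzyPreimage f φ v)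

/-- The initial interior map `î = p ∘ i ∘ q` on `L^X` induced by `(f, φ)` from an operator `i` on
`M^Y`, where `p = (f, φ)^←` and the argument `q` stands for the right adjoint of `p`. -/
def initialInterior (f : X → Y) (φ : M → L) (q : (X → L) → (Y → M))
    (i : (Y → M) → (Y → M)) : (X → L) → (X → L) :=
  fuzzyPreimage f φ ∘ i ∘ q

theorem fuzzyPreimage_mono [Preorder L] [Preorder M] (f : X → Y) {φ : M → L} (hφ : Monotone φ) :
    Monotone (fuzzyPreimage f φ) :=
  fun _ _ hbc x => hφ (hbc (f x))

theorem fuzzyPreimage_fuzzyPreimage (g : Z → X) (ρ : L → N) (f : X → Y) (φ : M → L)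
    (b : Y → M) :
    fuzzyPreimage g ρ (fuzzyPreimage f φ b) = fuzzyPreimage (f ∘ g) (ρ ∘ φ) b :=
  rfl

namespace FuzzyIContinuous

theorem mono_right [Preorder L] [Preorder M] {f : X → Y} {φ : M → L} (hφ : Monotone φ)
    {iX : (X → L) → (X → L)} {iY jY : (Y → M) → (Y → M)} (hji : jY ≤ iY)
    (h : FuzzyIContinuous f φ iX iY) : FuzzyIContinuous f φ iX jY :=
  fun v => (fuzzyPreimage_mono f hφ (hji v)).trans (h v)

theorem initialInterior_of_comp [Preorder L] [Preorder M] [Preorder N]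
    {g : Z → X} {ρ : L → N} (hρ : Monotone ρ) {f : X → Y} {φ : M → L} {q : (X → L) → (Y → M)}
    (hpq : GaloisConnection (fuzzyPreimage f φ) q) {i : (Y → M) → (Y → M)}
    {iZ : (Z → N) → (Z → N)} (hiZ : Monotone iZ)
    (h : FuzzyIContinuous (f ∘ g) (ρ ∘ φ) iZ i) :
    FuzzyIContinuous g ρ iZ (initialInterior f φ q i) := fun u =>
  calc fuzzyPreimage g ρ (initialInterior f φ q i u)
      = fuzzyPreimage (f ∘ g) (ρ ∘ φ) (i (q u)) := fuzzyPreimage_fuzzyPreimage g ρ f φ (i (q u))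
    _ ≤ iZ (fuzzyPreimage (f ∘ g) (ρ ∘ φ) (q u)) := h (q u)
    _ = iZ (fuzzyPreimage g ρ (fuzzyPreimage f φ (q u))) := by
      rw [fuzzyPreimage_fuzzyPreimage]
    _ ≤ iZ (fuzzyPreimage g ρ u) := hiZ (fuzzyPreimage_mono g hρ (hpq.l_u_le u))

end FuzzyIContinuous

end FuzzyPreimage

theorem initial_lift_continuity_general {Z X L N : Type*} [CompleteLattice L] [Preorder N]
    {g : Z → X} {ρ : L → N} (hρ : Monotone ρ)
    {Λ : Type*} {Y M : Λ → Type*} [∀ l, Preorder (M l)]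
    {f : ∀ l, X → Y l} {φ : ∀ l, M l → L} {q : ∀ l, (X → L) → (Y l → M l)}
    (hpq : ∀ l, GaloisConnection (fuzzyPreimage (f l) (φ l)) (q l))
    {i : ∀ l, (Y l → M l) → (Y l → M l)} {iZ : (Z → N) → (Z → N)} (hiZ : Monotone iZ)
    (hcont : ∃ l, FuzzyIContinuous (f l ∘ g) (ρ ∘ φ l) iZ (i l)) :
    FuzzyIContinuous g ρ iZ fun u => ⨅ l, initialInterior (f l) (φ l) (q l) (i l) u := by
  obtain ⟨l, hl⟩ := hcont
  have hle : (fun u => ⨅ k, initialInterior (f k) (φ k) (q k) (i k) u) ≤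
      initialInterior (f l) (φ l) (q l) (i l) := fun _ => iInf_le _ l
  exact (hl.initialInterior_of_comp hρ (hpq l) hiZ).mono_right hρ hle

/-- Initial lift of a structured source: if every composite `(f_λ ∘ g, ρ ∘ φ_λ)` is
fuzzy I-continuous, then `(g,ρ)` is fuzzy I-continuous into the meet `ĩ` of the
initial interior maps `î_λ = p_λ ∘ i_λ ∘ q_λ`. -/
theorem initial_lift_continuity
    {Z X L N : Type*} [CompleteLattice L] [CompleteLattice N]
    (g : Z → X) (ρ : L → N)
    (hρ : ∀ s : Set L, ρ (sInf s) = sInf (ρ '' s))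
    {Λ : Type*} [Nonempty Λ]
    (Y : Λ → Type*) (M : Λ → Type*) [∀ l, CompleteLattice (M l)]
    (f : ∀ l, X → Y l) (φ : ∀ l, M l → L)
    (q : ∀ l, (X → L) → (Y l → M l))
    (hgc : ∀ (l : Λ) (b : Y l → M l) (u : X → L),
      (φ l) ∘ b ∘ (f l) ≤ u ↔ b ≤ q l u)
    (i : ∀ l, (Y l → M l) → (Y l → M l))
    (hi1 : ∀ l v, i l v ≤ v)
    (hi2 : ∀ l v w, v ≤ w → i l v ≤ i l w)
    (hi3 : ∀ l, i l ⊤ = ⊤)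
    (iZ : (Z → N) → (Z → N))
    (hZ1 : ∀ v, iZ v ≤ v) (hZ2 : ∀ v w, v ≤ w → iZ v ≤ iZ w) (hZ3 : iZ ⊤ = ⊤)
    (hcont : ∀ (l : Λ) (w : Y l → M l),
      ρ ∘ ((φ l) ∘ (i l w) ∘ (f l)) ∘ g ≤ iZ (ρ ∘ ((φ l) ∘ w ∘ (f l)) ∘ g)) :
    ∀ u : X → L,
      ρ ∘ (⨅ l, (φ l) ∘ (i l (q l u)) ∘ (f l)) ∘ g ≤ iZ (ρ ∘ u ∘ g) := by
  obtain ⟨l⟩ := ‹Nonempty Λ›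
  exact initial_lift_continuity_general (OrderHomClass.mono (⟨ρ, hρ⟩ : sInfHom L N)) hgc
    hZ2 ⟨l, hcont l⟩
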